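/- For every integer k ≥ 2 and every odd integer q ≥ 5 there exists N such that for all n ≥ N the following holds. Let G be a C_{k,q}-free graph on n vertices with e(G) ≥ ⌊n²/4⌋ + (k−1)² and δ(G) ≥ ⌊n/2⌋, let V(G) = V₀ ∪ V₁ be a partition maximizing the number of crossing edges e(V₀,V₁), and suppose e(V₀) + e(V₁) < n²/1600. Then ν(G[V₀]) + ν(G[V₁]) ≤ k − 1. -/

import Mathlib

/-!
The proof first shows that the graph is close to complete bipartite and then embeds `C_{k,q}` greedily.

In a maximum cut every vertex has at least half of its neighbours across, hence about `n / 4` of them.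
As `e(G) ≥ ⌊n²/4⌋` and there are fewer than `n²/1600` inner edges, fewer than `n²/1600` cross pairs are
non-adjacent, so any two sets of `n / 40` vertices on opposite sides span an edge. Therefore any two
vertices on opposite sides are joined by paths of every (fixed) odd length at least `3`, avoiding any bounded
set of vertices (`conn_three`, `Conn.iterate`). A vertex with `k` neighbours in its own class would then
be the center of a `C_{k,q}` (`card_innerNbrs_lt`), so all inner degrees are less than `k`.

With the minimum degree condition, every vertex is now adjacent to all but `O(k)` vertices of the other
class, which also yields paths of every even length between vertices of the same class. If there were `k`
disjoint inner edges, a vertex `v` of `V₀` off these edges and adjacent to all their endpoints in `V₁`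
would be the center of a `C_{k,q}` whose `i`-th cycle uses the `i`-th edge
(`containsCopy_of_matching`). Both embeddings rely on `containsCopy_of_cycles`.
-/

open SimpleGraph

section Defs

variable {V W : Type*}

/-- The set of edges of `G` with both endpoints in `S`. -/
def inEdges (G : SimpleGraph V) (S : Set V) : Set (Sym2 V) :=
  {e | e ∈ G.edgeSet ∧ ∀ v ∈ e, v ∈ S}

/-- The number of edges of `G` with both endpoints in `S`. -/
noncomputable def edgesIn (G : SimpleGraph V) (S : Set V) : ℕ := (inEdges G S).ncard

/-- The set of edges of `G` with one endpoint in `S` and the other in `T`. -/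
def crossEdges (G : SimpleGraph V) (S T : Set V) : Set (Sym2 V) :=
  {e | e ∈ G.edgeSet ∧ ∃ u ∈ S, ∃ v ∈ T, e = s(u, v)}

/-- The number of edges of `G` with one endpoint in `S` and the other in `T`. -/
noncomputable def edgesBetween (G : SimpleGraph V) (S T : Set V) : ℕ := (crossEdges G S T).ncard

/-- The matching number of a set of edges: the largest number of pairwise
vertex-disjoint edges that can be chosen from `E`. -/
noncomputable def nuSet (E : Set (Sym2 V)) : ℕ :=
  sSup {m | ∃ M : Finset (Sym2 V), ↑M ⊆ E ∧
    (M : Set (Sym2 V)).Pairwise (fun e f => ∀ v, v ∈ e → v ∉ f) ∧ M.card = m}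

/-- The matching number of a graph. -/
noncomputable def nu (G : SimpleGraph V) : ℕ := nuSet G.edgeSet

/-- `G` contains a subgraph isomorphic to `H`, i.e. there is an injective
graph homomorphism from `H` to `G`. -/
def ContainsCopy (H : SimpleGraph W) (G : SimpleGraph V) : Prop :=
  ∃ f : H →g G, Function.Injective f

/-- The Turán number `ex(n, H)`: the maximum number of edges of an `H`-free
simple graph on `n` vertices. -/
noncomputable def exNum (n : ℕ) (H : SimpleGraph W) : ℕ :=
  sSup {m | ∃ G : SimpleGraph (Fin n), ¬ ContainsCopy H G ∧ G.edgeSet.ncard = m}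

/-- Underlying relation of the graph `C_{k,q}`: the vertex `none` is the center,
and for each `i : Fin k` the vertices `(i, 0), …, (i, q-2)` together with the
center form a cycle of length `q`. -/
def CkqRel (k q : ℕ) : Option (Fin k × Fin (q - 1)) → Option (Fin k × Fin (q - 1)) → Prop
  | none, some (_, j) => (j : ℕ) = 0 ∨ (j : ℕ) = q - 2
  | some (i, j), some (i', j') => i = i' ∧ (j' : ℕ) = (j : ℕ) + 1
  | _, _ => False

/-- The graph `C_{k,q}` on `k(q-1)+1` vertices consisting of `k` cycles of length `q`
intersecting in exactly one common vertex (the center). -/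
def Ckq (k q : ℕ) : SimpleGraph (Option (Fin k × Fin (q - 1))) :=
  SimpleGraph.fromRel (CkqRel k q)

/-- The member of the family `𝓕_{n,k}`: the Turán graph `T_{n,2}` (with classes the
even- and odd-indexed vertices) together with the edges of a complete bipartite graph
`K_{k-1,k-1}` on the even vertices `0, 2, …, 2(2(k-1)-1)` added inside the even class. -/
def Fgraph (n k : ℕ) : SimpleGraph (Fin n) :=
  SimpleGraph.fromRel (fun u v =>
    ((u : ℕ) % 2 ≠ (v : ℕ) % 2) ∨
    (∃ s t : ℕ, s < k - 1 ∧ k - 1 ≤ t ∧ t < 2 * (k - 1) ∧ (u : ℕ) = 2 * s ∧ (v : ℕ) = 2 * t))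

/-- The maximum degree of the subgraph of `G` induced on `S`. -/
noncomputable def DeltaIn (G : SimpleGraph V) (S : Set V) : ℕ :=
  sSup {d | ∃ v ∈ S, d = ((G.neighborSet v) ∩ S).ncard}

/-- The degree of `x` in the subgraph of `G` induced on `S`. -/
noncomputable def degIn (G : SimpleGraph V) (S : Set V) (x : V) : ℕ :=
  ((G.neighborSet x) ∩ S).ncard

end Defs

section Aux

open Classical Finset

set_option linter.unusedSectionVars false

/-! ### Paths and cycles avoiding a bounded set -/

variable {V : Type*}

/-- Any two distinct vertices `a`, `b` whose classes under the bipartition `c` fit the parity of `l`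
are joined by a path of length exactly `l` avoiding any given set of at most `K` vertices
(which contains neither `a` nor `b`). -/
def Conn (G : SimpleGraph V) (c : V → Bool) (l K : ℕ) : Prop :=
  ∀ a b : V, (c a = c b ↔ Even l) → a ≠ b → ∀ F : Finset V, F.card ≤ K → a ∉ F → b ∉ F →
    ∃ w : G.Walk a b, w.IsPath ∧ w.length = l ∧ ∀ z ∈ w.support, z ∉ F

/-- The neighbours of `a` in the class opposite to its own. -/
noncomputable def crossNbrs [Fintype V] (G : SimpleGraph V) (c : V → Bool) (a : V) : Finset V :=
  univ.filter fun b => G.Adj a b ∧ c b ≠ c a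

/-- The neighbours of `a` in its own class. -/
noncomputable def innerNbrs [Fintype V] (G : SimpleGraph V) (c : V → Bool) (a : V) : Finset V :=
  univ.filter fun b => G.Adj a b ∧ c b = c a

/-- There is a `q`-cycle through `v` disjoint from `F`, encoded as a path of length `q - 1` ending
at `v` whose starting vertex is adjacent to `v`. -/
def CycleAvoiding (G : SimpleGraph V) (q : ℕ) (v : V) (F : Finset V) : Prop :=
  ∃ (u : V) (w : G.Walk u v), G.Adj v u ∧ w.IsPath ∧ w.length = q - 1 ∧ ∀ z ∈ w.support, z ∉ F

lemma exists_mem_notMem (A F : Finset V) (h : F.card < A.card) : ∃ x ∈ A, x ∉ F :=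
  Finset.exists_mem_notMem_of_card_lt_card h

variable [Fintype V] {G : SimpleGraph V} {c : V → Bool}

lemma mem_crossNbrs {a b : V} : b ∈ crossNbrs G c a ↔ G.Adj a b ∧ c b ≠ c a := by
  simp [crossNbrs]

lemma mem_innerNbrs {a b : V} : b ∈ innerNbrs G c a ↔ G.Adj a b ∧ c b = c a := by
  simp [innerNbrs]

/-- Paths get one edge longer by moving from `a` to an unused neighbour on the other side, at the
cost of one forbidden vertex. -/
lemma Conn.step {l K : ℕ} (h : Conn G c l (K + 1))
    (hdeg : ∀ a, K + 1 < (crossNbrs G c a).card) : Conn G c (l + 1) K := by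
  intro a b hab hne F hF ha hb
  obtain ⟨x, hx, hxF⟩ := exists_mem_notMem (crossNbrs G c a) (insert b F)
    (lt_of_le_of_lt ((card_insert_le _ _).trans (by omega)) (hdeg a))
  rw [mem_crossNbrs] at hx
  rw [mem_insert, not_or] at hxF
  have hpar : c x = c b ↔ Even l := by
    rw [Nat.even_add_one] at hab
    have := hx.2
    cases hca : c a <;> cases hcb : c b <;> cases hcx : c x <;> simp_all
  obtain ⟨w, hw, hl, hav⟩ := h x b hpar hxF.1 (insert a F)
    ((card_insert_le _ _).trans (by omega))
    (by simp [hx.1.ne', hxF.2]) (by simp [hne.symm, hb])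
  refine ⟨Walk.cons hx.1 w, ?_, by simp [hl], ?_⟩
  · rw [Walk.cons_isPath_iff]
    exact ⟨hw, fun hmem => hav a hmem (by simp)⟩
  · intro z hz
    rw [Walk.support_cons, List.mem_cons] at hz
    rcases hz with rfl | hz
    · exact ha
    · exact fun hzF => hav z hz (mem_insert_of_mem hzF)

lemma Conn.iterate {l K : ℕ} (t : ℕ) (h : Conn G c l (K + t))
    (hdeg : ∀ a, K + t < (crossNbrs G c a).card) : Conn G c (l + t) K := by
  induction t generalizing l with
  | zero => exact h
  | succ t ih =>
    have h' : Conn G c (l + 1) (K + t) := Conn.step h hdeg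
    have := ih h' (fun a => lt_of_le_of_lt (by omega) (hdeg a))
    rwa [show l + (t + 1) = l + 1 + t by omega]

lemma conn_two {K : ℕ}
    (h : ∀ a b, c a = c b → K < (crossNbrs G c a ∩ crossNbrs G c b).card) : Conn G c 2 K := by
  intro a b hab hne F hF ha hb
  obtain ⟨x, hx, hxF⟩ := exists_mem_notMem _ F (lt_of_le_of_lt hF (h a b (hab.2 even_two)))
  rw [mem_inter, mem_crossNbrs, mem_crossNbrs] at hx
  refine ⟨Walk.cons hx.1.1 (Walk.cons hx.2.1.symm Walk.nil), ?_, by simp, ?_⟩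
  · simp [hx.1.1.ne, hx.2.1.ne', hne]
  · simp [ha, hb, hxF]

lemma conn_three {K : ℕ}
    (h : ∀ a b, c a ≠ c b → ∀ F : Finset V, F.card ≤ K + 2 →
      ∃ x y, x ∈ crossNbrs G c a ∧ x ∉ F ∧ y ∈ crossNbrs G c b ∧ y ∉ F ∧ G.Adj x y) : Conn G c 3 K := by
  intro a b hab hne F hF ha hb
  have hab' : c a ≠ c b := fun h => by
    have := hab.1 h
    revert this; decide
  obtain ⟨x, y, hx, hxF, hy, hyF, hxy⟩ := h a b hab' (insert a (insert b F)) (by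
    have h1 := card_insert_le a (insert b F)
    have h2 := card_insert_le b F
    omega)
  simp only [mem_crossNbrs, mem_insert, not_or] at hx hy hxF hyF
  refine ⟨Walk.cons hx.1 (Walk.cons hxy (Walk.cons hy.1.symm Walk.nil)), ?_, by simp, ?_⟩
  · simp [hx.1.ne, hxy.ne, hne, hy.1.ne', hxF.2.1, Ne.symm hyF.1]
  · simp [ha, hb, hxF.2.2, hyF.2.2]

/-! ### Embedding the union of cycles -/

/-- Greedy assembly of `C_{k,q}`: the `i`-th cycle is reserved the seed vertices `S i`, so it suffices
to find, for each `i`, a `q`-cycle through `v` avoiding any bounded set disjoint from `S i`; that set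
consists of the cycles already built and the seeds of the later ones. -/
lemma containsCopy_of_cycles {k q : ℕ} (hq : 5 ≤ q) (v : V) (S : ℕ → Finset V)
    (hS2 : ∀ i, (S i).card ≤ 2) (hvS : ∀ i < k, v ∉ S i)
    (hdisj : ∀ i < k, ∀ j < k, i < j → Disjoint (S i) (S j))
    (hcyc : ∀ i < k, ∀ F : Finset V, F.card ≤ k * (q - 1) + 2 * k → v ∉ F →
      Disjoint F (S i) → CycleAvoiding G q v F) : ContainsCopy (Ckq k q) G := by
  have key : ∀ m ≤ k, ∃ P : ℕ → ℕ → V, ∀ i < m,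
      (∀ j < q - 1, P i j ≠ v) ∧ G.Adj v (P i 0) ∧ G.Adj v (P i (q - 2)) ∧
      (∀ j, j + 1 < q - 1 → G.Adj (P i j) (P i (j + 1))) ∧
      (∀ j < q - 1, ∀ j' < q - 1, P i j = P i j' → j = j') ∧
      (∀ j < q - 1, ∀ t < k, i < t → P i j ∉ S t) ∧
      (∀ i' < i, ∀ j < q - 1, ∀ j' < q - 1, P i j ≠ P i' j') := by
    intro m
    induction m with
    | zero => exact fun _ => ⟨fun _ _ => v, by simp⟩
    | succ m ih =>
      intro hm
      obtain ⟨P, hP⟩ := ih (by omega)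
      set U : Finset V := (range m).biUnion fun i => (range (q - 1)).image (P i) with hU
      set T : Finset V := ((range k).filter (m < ·)).biUnion S with hT
      have hUc : U.card ≤ m * (q - 1) := by
        have := card_biUnion_le_card_mul (range m) (fun i => (range (q - 1)).image (P i)) (q - 1)
          (fun i _ => card_image_le.trans (by simp))
        simpa using this
      have hTc : T.card ≤ k * 2 := by
        refine (card_biUnion_le_card_mul _ S 2 (fun i _ => hS2 i)).trans ?_
        exact Nat.mul_le_mul_right _ ((card_filter_le _ _).trans (by simp))
      have hmk : m * (q - 1) ≤ k * (q - 1) := Nat.mul_le_mul_right _ (by omega)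
      obtain ⟨u, w, hu, hw, hl, hav⟩ := hcyc m (by omega) (U ∪ T)
        ((card_union_le _ _).trans (by omega))
        (by
          simp only [hU, hT, mem_union, mem_biUnion, mem_image, mem_range, mem_filter, not_or]
          constructor
          · rintro ⟨i, hi, j, hj, h⟩
            exact (hP i hi).1 j hj h
          · rintro ⟨i, hi, h⟩
            exact hvS i hi.1 h)
        (by
          rw [Finset.disjoint_left]
          intro z hz hzm
          simp only [hU, hT, mem_union, mem_biUnion, mem_image, mem_range, mem_filter] at hz
          rcases hz with ⟨i, hi, j, hj, rfl⟩ | ⟨i, hi, h⟩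
          · exact (hP i hi).2.2.2.2.2.1 j hj m (by omega) hi hzm
          · exact Finset.disjoint_left.1 (hdisj m (by omega) i hi.1 hi.2) hzm h)
      have hinj := hw.getVert_injOn
      have hend : w.getVert (q - 1) = v := by rw [← hl]; exact w.getVert_length
      refine ⟨Function.update P m w.getVert, fun i hi => ?_⟩
      rcases Nat.lt_succ_iff_lt_or_eq.1 hi with hi | rfl
      · have hne : i ≠ m := by omega
        rw [Function.update_of_ne hne]
        obtain ⟨h1, h2, h3, h4, h5, h6, h7⟩ := hP i hi
        refine ⟨h1, h2, h3, h4, h5, h6, fun i' hi' => ?_⟩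
        rw [Function.update_of_ne (by omega)]
        exact h7 i' hi'
      · rw [Function.update_self]
        refine ⟨?_, by simpa using hu, ?_, ?_, ?_, ?_, ?_⟩
        · intro j hj h
          have := hinj (x₁ := j) (x₂ := q - 1) (by simp; omega) (by simp; omega) (h.trans hend.symm)
          omega
        · have := w.adj_getVert_succ (i := q - 2) (by omega)
          rw [show q - 2 + 1 = q - 1 by omega, hend] at this
          exact this.symm
        · exact fun j hj => w.adj_getVert_succ (by omega)
        · exact fun j hj j' hj' h => hinj (by simp; omega) (by simp; omega) h
        · intro j hj t ht hit hmem
          refine hav _ (w.getVert_mem_support j) (mem_union_right _ ?_)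
          simp only [hT, mem_biUnion, mem_filter, mem_range]
          exact ⟨t, ⟨ht, hit⟩, hmem⟩
        · intro i' hi' j hj j' hj' h
          rw [Function.update_of_ne (by omega)] at h
          refine hav _ (w.getVert_mem_support j) (mem_union_left _ ?_)
          simp only [hU, mem_biUnion, mem_image, mem_range]
          exact ⟨i', hi', j', hj', h.symm⟩
  obtain ⟨P, hP⟩ := key k le_rfl
  let f : Option (Fin k × Fin (q - 1)) → V := fun o => o.elim v fun x => P x.1 x.2
  have hrel : ∀ a b, CkqRel k q a b → G.Adj (f a) (f b) := by
    rintro (_ | ⟨i, j⟩) (_ | ⟨i', j'⟩) h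
    · exact h.elim
    · obtain ⟨_, h0, h1, _⟩ := hP i' i'.2
      rcases h with h | h
      · simpa [f, h] using h0
      · simpa [f, h] using h1
    · exact h.elim
    · obtain ⟨rfl, h⟩ := h
      have := (hP i i.2).2.2.2.1 j (by omega)
      simpa [f, h] using this
  refine ⟨⟨f, ?_⟩, ?_⟩
  · intro a b hab
    rcases (SimpleGraph.fromRel_adj _ _ _).1 hab with ⟨_, h | h⟩
    · exact hrel a b h
    · exact (hrel b a h).symm
  · have hf : Function.Injective f := by
      rintro (_ | ⟨i, j⟩) (_ | ⟨i', j'⟩) h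
      · rfl
      · exact ((hP i' i'.2).1 j' j'.2 h.symm).elim
      · exact ((hP i i.2).1 j j.2 h).elim
      · have h' : P i j = P i' j' := h
        rcases lt_trichotomy (i : ℕ) i' with hii | hii | hii
        · exact ((hP i' i'.2).2.2.2.2.2.2 i hii j' j'.2 j j.2 h'.symm).elim
        · obtain rfl := Fin.ext hii
          obtain rfl := Fin.ext ((hP i i.2).2.2.2.2.1 j j.2 j' j'.2 h')
          rfl
        · exact ((hP i i.2).2.2.2.2.2.2 i' hii j j.2 j' j'.2 h').elim
    exact hf

/-- A vertex `v` with `k` inner neighbours `a i` is the center of a `C_{k,q}`: go from `v` to `a i`,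
then along a path of length `q - 2` to a cross neighbour of `v`, and back. -/
lemma card_innerNbrs_lt {k q : ℕ} (hq : 5 ≤ q) (hqodd : Odd q)
    (hG : ¬ ContainsCopy (Ckq k q) G)
    (hconn : Conn G c (q - 2) (k * (q - 1) + 2 * k + 1))
    (hdeg : ∀ a, k * (q - 1) + 2 * k < (crossNbrs G c a).card) (v : V) :
    (innerNbrs G c v).card < k := by
  by_contra! hcard
  apply hG
  obtain ⟨A, hA, hAk⟩ := exists_subset_card_eq hcard
  let e := A.equivFinOfCardEq hAk
  let a : ℕ → V := fun i => if h : i < k then e.symm ⟨i, h⟩ else v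
  have ha : ∀ i < k, G.Adj v (a i) ∧ c (a i) = c v := by
    intro i hi
    rw [← mem_innerNbrs]
    apply hA
    simp [a, hi]
  refine containsCopy_of_cycles hq v (fun i => {a i}) (by simp) ?_ ?_ ?_
  · intro i hi
    simpa using (ha i hi).1.ne
  · intro i hi j hj hij
    simp only [disjoint_singleton, a, hi, hj, dif_pos]
    intro h
    have := e.symm.injective (Subtype.ext h)
    simp at this
    omega
  · intro i hi F hF hvF hFa
    rw [disjoint_singleton_right] at hFa
    obtain ⟨b, hb, hbF⟩ := exists_mem_notMem (crossNbrs G c v) F (lt_of_le_of_lt hF (hdeg v))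
    rw [mem_crossNbrs] at hb
    have hab : c (a i) ≠ c b := by rw [(ha i hi).2]; exact hb.2.symm
    obtain ⟨w, hw, hl, hav⟩ := hconn (a i) b
      (by
        have : ¬ Even (q - 2) := by
          rw [Nat.not_even_iff_odd]; exact Nat.Odd.sub_even (by omega) hqodd even_two
        simp [hab, this])
      (fun h => hab (by rw [h])) (insert v F) ((card_insert_le _ _).trans (by omega))
      (by simp [(ha i hi).1.ne', hFa]) (by simp [hb.1.ne', hbF])
    refine ⟨a i, w.concat hb.1.symm, (ha i hi).1, hw.concat ?_ _, ?_, ?_⟩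
    · exact fun h => hav v h (by simp)
    · rw [Walk.length_concat, hl]; omega
    · intro z hz
      rw [Walk.support_concat] at hz
      rcases (by simpa using hz : z ∈ w.support ∨ z = v) with hz | rfl
      · exact fun h => hav z hz (mem_insert_of_mem h)
      · exact hvF

/-- A matching `x i — y i` of `k` inner edges extends to a `C_{k,q}` centered at a vertex `v` off
the matching that is adjacent to all `x i` in the other class. -/
lemma containsCopy_of_matching {k q : ℕ} (hq : 5 ≤ q) (hqodd : Odd q)
    (hodd : Conn G c (q - 2) (k * (q - 1) + 2 * k + 1))
    (heven : Conn G c (q - 3) (k * (q - 1) + 2 * k + 2))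
    (hcommon : ∀ a b, c a = c b →
      k * (q - 1) + 2 * k + 1 < (crossNbrs G c a ∩ crossNbrs G c b).card)
    (x y : ℕ → V) (hxy : ∀ i < k, G.Adj (x i) (y i)) (hc : ∀ i < k, c (x i) = c (y i))
    (hdisj : ∀ i < k, ∀ j < k, i < j → Disjoint ({x i, y i} : Finset V) {x j, y j})
    (v : V) (hv : ∀ i < k, v ≠ x i ∧ v ≠ y i) (hvx : ∀ i < k, c v ≠ c (x i) → G.Adj v (x i)) :
    ContainsCopy (Ckq k q) G := by
  refine containsCopy_of_cycles hq v (fun i => {x i, y i}) (fun i => card_le_two) ?_ hdisj ?_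
  · intro i hi
    simpa using hv i hi
  · intro i hi F hF hvF hFS
    have hxF : x i ∉ F := fun h => Finset.disjoint_left.1 hFS h (by simp)
    have hyF : y i ∉ F := fun h => Finset.disjoint_left.1 hFS h (by simp)
    obtain ⟨hvx', hvy'⟩ := hv i hi
    by_cases hcv : c v = c (x i)
    -- Same class: the cycle is `v, a, x, y` followed by a path of even length `q - 3` back to `v`.
    · obtain ⟨a, ha, haF⟩ := exists_mem_notMem _ (insert (y i) F)
        (lt_of_le_of_lt ((card_insert_le _ _).trans (by omega)) (hcommon v (x i) hcv))
      rw [mem_inter, mem_crossNbrs, mem_crossNbrs] at ha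
      rw [mem_insert, not_or] at haF
      obtain ⟨w, hw, hl, hav⟩ := heven (y i) v
        (by
          have : Even (q - 3) := Nat.Odd.sub_odd hqodd (by decide)
          simp [this, hcv, hc i hi])
        hvy'.symm (insert a (insert (x i) F))
        (by
          have h1 := card_insert_le a (insert (x i) F)
          have h2 := card_insert_le (x i) F
          omega)
        (by simp [Ne.symm haF.1, (hxy i hi).ne', hyF]) (by simp [ha.1.1.ne, hvx', hvF])
      refine ⟨a, Walk.cons ha.2.1.symm (Walk.cons (hxy i hi) w), ha.1.1, ?_, ?_, ?_⟩
      · rw [Walk.cons_isPath_iff, Walk.cons_isPath_iff]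
        refine ⟨⟨hw, fun h => hav _ h (by simp)⟩, fun h => ?_⟩
        rw [Walk.support_cons, List.mem_cons] at h
        rcases h with h | h
        · exact ha.2.1.ne' h
        · exact hav _ h (by simp)
      · simp only [Walk.length_cons, hl]; omega
      · intro z hz
        simp only [Walk.support_cons, List.mem_cons] at hz
        rcases hz with rfl | rfl | hz
        · exact haF.2
        · exact hxF
        · exact fun h => hav z hz (by simp [h])
    -- Other class: the cycle is `v, x, y` followed by a path of odd length `q - 2` back to `v`.
    · obtain ⟨w, hw, hl, hav⟩ := hodd (y i) v
        (by
          have : ¬ Even (q - 2) := by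
            rw [Nat.not_even_iff_odd]; exact Nat.Odd.sub_even (by omega) hqodd even_two
          simp [this, ← hc i hi, Ne.symm hcv])
        hvy'.symm (insert (x i) F)
        ((card_insert_le _ _).trans (by omega))
        (by simp [(hxy i hi).ne', hyF]) (by simp [hvx', hvF])
      refine ⟨x i, Walk.cons (hxy i hi) w, hvx i hi hcv, ?_, ?_, ?_⟩
      · rw [Walk.cons_isPath_iff]
        exact ⟨hw, fun h => hav _ h (by simp)⟩
      · simp only [Walk.length_cons, hl]; omega
      · intro z hz
        simp only [Walk.support_cons, List.mem_cons] at hz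
        rcases hz with rfl | hz
        · exact hxF
        · exact fun h => hav z hz (by simp [h])
/-! ### Maximum cuts, missing pairs and matchings -/

lemma crossEdges_comm (G : SimpleGraph V) (S T : Set V) : crossEdges G S T = crossEdges G T S := by
  ext e
  constructor <;>
  · rintro ⟨he, u, hu, v, hv, rfl⟩
    exact ⟨he, v, hv, u, hu, Sym2.eq_swap⟩

/-- In a maximum cut no vertex has more neighbours on its own side than across: otherwise moving it
to the other side would enlarge the cut. -/
lemma ncard_inner_le_cross {S T : Set V} (hST : S ∪ T = Set.univ) (hd : Disjoint S T)
    (hmax : ∀ S' T' : Set V, S' ∪ T' = Set.univ → Disjoint S' T' →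
      edgesBetween G S' T' ≤ edgesBetween G S T) {x : V} (hx : x ∈ S) :
    (G.neighborSet x ∩ S).ncard ≤ (G.neighborSet x ∩ T).ncard := by
  have hxT : x ∉ T := Set.disjoint_left.1 hd hx
  have h := hmax (S \ {x}) (insert x T)
    (by
      ext z
      have hz : z ∈ S ∨ z ∈ T := (Set.mem_union _ _ _).1 (hST ▸ Set.mem_univ z)
      by_cases hzx : z = x
      · simp [hzx]
      · simpa [hzx] using hz)
    (by
      rw [Set.disjoint_left]
      rintro z ⟨hzS, hzx⟩ (hz | hz)
      · exact hzx hz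
      · exact Set.disjoint_left.1 hd hzS hz)
  set C : Set (Sym2 V) := {e | e ∈ crossEdges G S T ∧ x ∉ e} with hC
  have hinj : Function.Injective (fun y => s(x, y)) := fun y z h => by
    simpa using Sym2.congr_right.1 h
  have h1 : edgesBetween G S T ≤ C.ncard + (G.neighborSet x ∩ T).ncard := by
    rw [← Set.ncard_image_of_injective (G.neighborSet x ∩ T) hinj]
    refine le_trans (Set.ncard_le_ncard ?_ (Set.toFinite _)) (Set.ncard_union_le _ _)
    rintro e he
    by_cases hxe : x ∈ e
    · right
      obtain ⟨he, u, hu, v, hv, rfl⟩ := he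
      have hxv : x ≠ v := fun h => hxT (h ▸ hv)
      have hxu : x = u := by simpa [hxv] using hxe
      subst hxu
      exact ⟨v, ⟨he, hv⟩, rfl⟩
    · exact Or.inl ⟨he, hxe⟩
  have h2 : C.ncard + (G.neighborSet x ∩ S).ncard ≤ edgesBetween G (S \ {x}) (insert x T) := by
    rw [← Set.ncard_image_of_injective (G.neighborSet x ∩ S) hinj,
      ← Set.ncard_union_eq _ (Set.toFinite _) (Set.toFinite _)]
    · refine Set.ncard_le_ncard ?_ (Set.toFinite _)
      rintro e (⟨⟨he, u, hu, v, hv, rfl⟩, hxe⟩ | ⟨y, ⟨hy, hyS⟩, rfl⟩)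
      · refine ⟨he, u, ⟨hu, ?_⟩, v, Or.inr hv, rfl⟩
        rintro rfl
        simp at hxe
      · exact ⟨hy, y, ⟨hyS, (G.ne_of_adj hy).symm⟩, x, Or.inl rfl, Sym2.eq_swap⟩
    · rw [Set.disjoint_left]
      rintro e ⟨_, hxe⟩ ⟨y, _, rfl⟩
      simp at hxe
  omega

/-- Since `e(G) ≥ ⌊n²/4⌋ ≥ |S||T|`, the number of non-adjacent cross pairs is at most the number of
inner edges. -/
lemma card_mul_card_le_edgesIn {S T : Set V} (hST : S ∪ T = Set.univ) (hd : Disjoint S T)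
    (hedges : Fintype.card V ^ 2 / 4 ≤ G.edgeSet.ncard) (A B : Finset V)
    (hA : ∀ a ∈ A, a ∈ S) (hB : ∀ b ∈ B, b ∈ T) (hAB : ∀ a ∈ A, ∀ b ∈ B, ¬ G.Adj a b) :
    A.card * B.card ≤ edgesIn G S + edgesIn G T := by
  have hsplit : G.edgeSet.ncard ≤ edgesIn G S + edgesIn G T + edgesBetween G S T := by
    refine le_trans (Set.ncard_le_ncard (t := inEdges G S ∪ inEdges G T ∪ crossEdges G S T) ?_
      (Set.toFinite _)) ((Set.ncard_union_le _ _).trans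
        (Nat.add_le_add_right (Set.ncard_union_le _ _) _))
    intro e he
    induction e with
    | h u v =>
      have hu : u ∈ S ∪ T := hST ▸ Set.mem_univ u
      have hv : v ∈ S ∪ T := hST ▸ Set.mem_univ v
      rcases hu with hu | hu <;> rcases hv with hv | hv
      · exact Or.inl (Or.inl ⟨he, by simp [hu, hv]⟩)
      · exact Or.inr ⟨he, u, hu, v, hv, rfl⟩
      · exact Or.inr ⟨he, v, hv, u, hu, Sym2.eq_swap⟩
      · exact Or.inl (Or.inr ⟨he, by simp [hu, hv]⟩)
  set P : Finset (V × V) := S.toFinset ×ˢ T.toFinset with hP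
  have hsub : A ×ˢ B ⊆ P := by
    rintro ⟨a, b⟩ hab
    rw [mem_product] at hab
    simp [hP, hA a hab.1, hB b hab.2]
  have hcross : edgesBetween G S T ≤ (P \ A ×ˢ B).card := by
    refine le_trans ?_ (card_image_le (f := fun p : V × V => s(p.1, p.2)))
    rw [← Set.ncard_coe_finset]
    refine Set.ncard_le_ncard ?_ (Set.toFinite _)
    rintro e ⟨he, u, hu, v, hv, rfl⟩
    rw [mem_coe, mem_image]
    refine ⟨(u, v), ?_, rfl⟩
    rw [mem_sdiff]
    exact ⟨by simp [hP, hu, hv], fun h => hAB u (mem_product.1 h).1 v (mem_product.1 h).2 he⟩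
  have hcard := card_sdiff_add_card_eq_card hsub
  rw [card_product, hP, card_product] at hcard
  have hsum : S.toFinset.card + T.toFinset.card = Fintype.card V := by
    rw [← card_union_of_disjoint (by simpa using hd), ← Set.toFinset_union]
    simp [hST]
  have hle : S.toFinset.card * T.toFinset.card ≤ Fintype.card V ^ 2 / 4 := by
    rw [Nat.le_div_iff_mul_le (by norm_num), ← hsum]
    nlinarith [sq_nonneg ((S.toFinset.card : ℤ) - T.toFinset.card),
      four_mul_le_sq_add S.toFinset.card T.toFinset.card]
  rw [← hP] at hcard
  omega

/-- The supremum defining `nuSet` is attained. -/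
lemma exists_matching (E : Set (Sym2 V)) : ∃ M : Finset (Sym2 V), ↑M ⊆ E ∧
    (M : Set (Sym2 V)).Pairwise (fun e f => ∀ v, v ∈ e → v ∉ f) ∧ M.card = nuSet E := by
  refine Nat.sSup_mem (s := {m | ∃ M : Finset (Sym2 V), ↑M ⊆ E ∧
    (M : Set (Sym2 V)).Pairwise (fun e f => ∀ v, v ∈ e → v ∉ f) ∧ M.card = m})
    ⟨0, ∅, by simp⟩ ⟨Fintype.card (Sym2 V), ?_⟩
  rintro m ⟨M, _, _, rfl⟩
  exact card_le_univ M

/-- The matchings inside `S` and `T` together give `k` disjoint inner edges, listed as a sequence. The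
vertex `v₀` only serves as a value for indices `≥ k`. -/
lemma exists_matching_seq {S T : Set V} (hd : Disjoint S T) {k : ℕ}
    (h : k ≤ nuSet (inEdges G S) + nuSet (inEdges G T)) (v₀ : V) :
    ∃ x y : ℕ → V, (∀ i < k, G.Adj (x i) (y i)) ∧ (∀ i < k, x i ∈ S ∧ y i ∈ S ∨ x i ∈ T ∧ y i ∈ T) ∧
      ∀ i < k, ∀ j < k, i < j → Disjoint ({x i, y i} : Finset V) {x j, y j} := by
  obtain ⟨M, hM, hMp, hMc⟩ := exists_matching (inEdges G S)
  obtain ⟨M', hM', hMp', hMc'⟩ := exists_matching (inEdges G T)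
  have hex : ∀ e : Sym2 V, ∀ U : Set V, (∀ v ∈ e, v ∈ U) → ∃ v ∈ e, v ∈ U := by
    intro e U he
    induction e with
    | h u v => exact ⟨u, by simp, he u (by simp)⟩
  have hcross : ∀ e ∈ M, ∀ f ∈ M', ∀ v, v ∈ e → v ∉ f := fun e he f hf v hve hvf =>
    Set.disjoint_left.1 hd ((hM he).2 v hve) ((hM' hf).2 v hvf)
  have hMM : Disjoint M M' := by
    rw [Finset.disjoint_left]
    intro e he he'
    obtain ⟨v, hv, _⟩ := hex e S (hM he).2
    exact hcross e he e he' v hv hv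
  obtain ⟨R, hR, hRk⟩ := exists_subset_card_eq (s := M ∪ M') (n := k)
    (by rw [card_union_of_disjoint hMM]; omega)
  let g := R.equivFinOfCardEq hRk
  let e : ℕ → Sym2 V := fun i => if h : i < k then g.symm ⟨i, h⟩ else s(v₀, v₀)
  have heR : ∀ i < k, e i ∈ M ∪ M' := by
    intro i hi
    apply hR
    simp [e, hi]
  have hei : ∀ i < k, ∀ j < k, i < j → e i ≠ e j := by
    intro i hi j hj hij h
    simp only [e, hi, hj, dif_pos] at h
    have := g.symm.injective (Subtype.ext h)
    simp at this
    omega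
  have hxy : ∀ i, ∃ p : V × V, e i = s(p.1, p.2) := by
    intro i
    induction e i with
    | h u v => exact ⟨(u, v), rfl⟩
  choose p hp using hxy
  refine ⟨fun i => (p i).1, fun i => (p i).2, ?_, ?_, ?_⟩
  · intro i hi
    rw [← mem_edgeSet, ← hp i]
    rcases mem_union.1 (heR i hi) with h | h
    · exact (hM h).1
    · exact (hM' h).1
  · intro i hi
    have h1 : (p i).1 ∈ e i := by rw [hp i]; simp
    have h2 : (p i).2 ∈ e i := by rw [hp i]; simp
    rcases mem_union.1 (heR i hi) with h | h
    · exact Or.inl ⟨(hM h).2 _ h1, (hM h).2 _ h2⟩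
    · exact Or.inr ⟨(hM' h).2 _ h1, (hM' h).2 _ h2⟩
  · intro i hi j hj hij
    rw [Finset.disjoint_left]
    intro v hvi hvj
    have h1 : v ∈ e i := by rw [hp i]; simpa using hvi
    have h2 : v ∈ e j := by rw [hp j]; simpa using hvj
    rcases mem_union.1 (heR i hi) with h | h <;> rcases mem_union.1 (heR j hj) with h' | h'
    · exact hMp h h' (hei i hi j hj hij) v h1 h2
    · exact hcross _ h _ h' v h1 h2
    · exact hcross _ h' _ h v h2 h1
    · exact hMp' h h' (hei i hi j hj hij) v h1 h2

/-! ### The nearly complete bipartite case -/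

/-- If every vertex has at least `D` cross neighbours and the class `b` is only slightly larger than
`D`, some vertex of that class avoids all `x i`, `y i` and is adjacent to every `x i` opposite. -/
lemma exists_center {k D : ℕ}
    (hD : ∀ a, D ≤ (crossNbrs G c a).card)
    (b : Bool) (hk : k * (2 + ((univ.filter fun v => c v = b).card - D)) <
      (univ.filter fun v => c v = b).card)
    (x y : ℕ → V) :
    ∃ v, c v = b ∧ (∀ i < k, v ≠ x i ∧ v ≠ y i) ∧
      ∀ i < k, c v ≠ c (x i) → G.Adj v (x i) := by
  set B := univ.filter fun v => c v = b with hB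
  let bad : ℕ → Finset V := fun i => {x i, y i} ∪ B.filter fun v => c v ≠ c (x i) ∧ ¬ G.Adj v (x i)
  have hbad : ∀ i ∈ range k, (bad i).card ≤ 2 + (B.card - D) := by
    intro i _
    refine (card_union_le _ _).trans (Nat.add_le_add card_le_two ?_)
    by_cases hcx : c (x i) = b
    · rw [card_eq_zero.2]
      · exact Nat.zero_le _
      · rw [filter_eq_empty_iff]
        intro v hv
        simp [hB] at hv
        simp [hv, hcx]
    · have hsub : crossNbrs G c (x i) ⊆ B := by
        intro z hz
        rw [mem_crossNbrs] at hz
        simp only [hB, mem_filter, mem_univ, true_and]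
        have := hz.2
        cases b <;> cases h1 : c z <;> cases h2 : c (x i) <;> simp_all
      have : B.filter (fun v => c v ≠ c (x i) ∧ ¬ G.Adj v (x i)) ⊆ B \ crossNbrs G c (x i) := by
        intro z hz
        rw [mem_filter] at hz
        rw [mem_sdiff, mem_crossNbrs]
        exact ⟨hz.1, fun h => hz.2.2 h.1.symm⟩
      refine (card_le_card this).trans ?_
      rw [card_sdiff_of_subset hsub]
      exact Nat.sub_le_sub_left (hD _) _
  obtain ⟨v, hv, hvb⟩ := exists_mem_notMem B ((range k).biUnion bad)
    (lt_of_le_of_lt (by simpa using card_biUnion_le_card_mul _ _ _ hbad) hk)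
  have hvb' : ∀ i < k, v ∉ bad i := fun i hi h => hvb (mem_biUnion.2 ⟨i, mem_range.2 hi, h⟩)
  refine ⟨v, by simpa [hB] using hv, fun i hi => ?_, fun i hi hne => ?_⟩
  · have := hvb' i hi
    simp only [bad, mem_union, mem_insert, mem_singleton, not_or] at this
    exact this.1
  · by_contra hadj
    exact hvb' i hi (mem_union_right _ (mem_filter.2 ⟨hv, hne, hadj⟩))

lemma crossNbrs_add_innerNbrs (a : V) :
    (crossNbrs G c a).card + (innerNbrs G c a).card = (G.neighborSet a).ncard := by
  rw [← card_union_of_disjoint, ← Set.ncard_coe_finset]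
  · congr 1
    ext z
    simp only [coe_union, Set.mem_union, mem_coe, mem_crossNbrs, mem_innerNbrs, mem_neighborSet]
    tauto
  · rw [Finset.disjoint_left]
    intro z hz hz'
    rw [mem_crossNbrs] at hz
    rw [mem_innerNbrs] at hz'
    exact hz.2 hz'.2

/-- If every vertex misses only boundedly many vertices of the opposite class, `k` disjoint inner
edges force a `C_{k,q}`. -/
theorem containsCopy_of_nearly_complete {k q : ℕ} (hq : 5 ≤ q) (hqodd : Odd q)
    (hcard : 100 * (k * (q - 1) + 2 * k + q + k * k + 10) ≤ Fintype.card V)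
    (hD : ∀ a, Fintype.card V + 1 - 2 * k ≤ 2 * (crossNbrs G c a).card)
    (hodd : Conn G c (q - 2) (k * (q - 1) + 2 * k + 1))
    (x y : ℕ → V) (hxy : ∀ i < k, G.Adj (x i) (y i)) (hc : ∀ i < k, c (x i) = c (y i))
    (hdisj : ∀ i < k, ∀ j < k, i < j → Disjoint ({x i, y i} : Finset V) {x j, y j}) :
    ContainsCopy (Ckq k q) G := by
  set n := Fintype.card V with hn
  have hsub : ∀ a, crossNbrs G c a ⊆ univ.filter fun v => c v = !c a := by
    intro a z hz
    rw [mem_crossNbrs] at hz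
    simpa [Bool.eq_not] using hz.2
  -- Both classes are nonempty, since every vertex has a neighbour in the other one.
  have hne : ∀ b : Bool, ∃ a, c a = !b := by
    intro b
    obtain ⟨a⟩ : Nonempty V := Fintype.card_pos_iff.1 (by omega)
    obtain ⟨z, hz⟩ : (crossNbrs G c a).Nonempty := by
      rw [← card_pos]; have := hD a; omega
    rw [mem_crossNbrs] at hz
    by_cases h : c a = b
    · exact ⟨z, by rw [← h]; simpa [Bool.eq_not] using hz.2⟩
    · exact ⟨a, by simpa [Bool.eq_not] using h⟩
  have hlow : ∀ b : Bool, n + 1 - 2 * k ≤ 2 * (univ.filter fun v => c v = b).card := by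
    intro b
    obtain ⟨a, ha⟩ := hne b
    have h1 := card_le_card (hsub a)
    rw [ha, Bool.not_not] at h1
    have := hD a
    omega
  have hsum : (univ.filter fun v => c v = true).card + (univ.filter fun v => c v = false).card
      = n := by
    have := card_filter_add_card_filter_not (s := (univ : Finset V)) (fun v => c v = true)
    simpa using this
  have hup : ∀ b : Bool, 2 * (univ.filter fun v => c v = b).card + 1 ≤ n + 2 * k := by
    intro b
    have h1 := hlow true
    have h2 := hlow false
    cases b <;> omega
  have hcommon : ∀ a b, c a = c b →
      n + 3 ≤ 2 * (crossNbrs G c a ∩ crossNbrs G c b).card + 6 * k := by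
    intro a b hab
    have h1 := card_union_add_card_inter (crossNbrs G c a) (crossNbrs G c b)
    have h2 := card_le_card (union_subset (hsub a) (hab ▸ hsub b))
    have h3 := hup (!c a)
    have h4 := hD a
    have h5 := hD b
    omega
  have heven : Conn G c (q - 3) (k * (q - 1) + 2 * k + 2) := by
    have h2 : Conn G c 2 (k * (q - 1) + 2 * k + 2 + (q - 5)) := by
      refine conn_two fun a b hab => ?_
      have := hcommon a b hab
      omega
    have := h2.iterate (q - 5) (fun a => by have := hD a; omega)
    rwa [show 2 + (q - 5) = q - 3 by omega] at this
  obtain ⟨v, _, hv, hvx⟩ := exists_center (G := G) (c := c) (k := k) (D := (n + 2 - 2 * k) / 2)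
    (fun a => by have := hD a; omega) true
    (by
      have h1 := hlow true
      have h2 := hup true
      refine lt_of_le_of_lt (Nat.mul_le_mul_left k (m := 2 * k + 2) (by omega)) ?_
      have : k * (2 * k + 2) = 2 * (k * k) + 2 * k := by ring
      omega) x y
  exact containsCopy_of_matching hq hqodd hodd heven
    (fun a b hab => by have := hcommon a b hab; omega) x y hxy hc hdisj v hv hvx

end Aux

/-- **Claim 3.** In the standard setup, `ν(G[V₀]) + ν(G[V₁]) ≤ k - 1`. -/
theorem matching_numbers_sum_bound (k q : ℕ) (hk : 2 ≤ k) (hq : 5 ≤ q) (hqodd : Odd q) :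
    ∃ N : ℕ, ∀ n : ℕ, N ≤ n → ∀ G : SimpleGraph (Fin n),
      ¬ ContainsCopy (Ckq k q) G →
      n ^ 2 / 4 + (k - 1) ^ 2 ≤ G.edgeSet.ncard →
      (∀ v, n / 2 ≤ (G.neighborSet v).ncard) →
      ∀ V₀ V₁ : Set (Fin n), V₀ ∪ V₁ = Set.univ → Disjoint V₀ V₁ →
        (∀ W₀ W₁ : Set (Fin n), W₀ ∪ W₁ = Set.univ → Disjoint W₀ W₁ →
          edgesBetween G W₀ W₁ ≤ edgesBetween G V₀ V₁) →
        ((edgesIn G V₀ + edgesIn G V₁ : ℕ) : ℝ) < (n : ℝ) ^ 2 / 1600 →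
        nuSet (inEdges G V₀) + nuSet (inEdges G V₁) ≤ k - 1 := by
  classical
  refine ⟨100 * (k * (q - 1) + 2 * k + q + k * k + 10), ?_⟩
  intro n hn G hG hE hdeg V₀ V₁ hV hd hmax hin
  have hin' : 1600 * (edgesIn G V₀ + edgesIn G V₁) < n ^ 2 := by
    rw [lt_div_iff₀ (by norm_num)] at hin
    have : (edgesIn G V₀ + edgesIn G V₁) * 1600 < n ^ 2 := by exact_mod_cast hin
    omega
  have hV₁ : ∀ z, z ∉ V₀ ↔ z ∈ V₁ := by
    intro z
    have hz : z ∈ V₀ ∪ V₁ := hV ▸ Set.mem_univ z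
    exact ⟨fun h => hz.resolve_left h, fun h h' => Set.disjoint_left.1 hd h' h⟩
  let c : Fin n → Bool := fun v => decide (v ∈ V₀)
  -- In a maximum cut, every vertex has at least half of its neighbours across.
  have hmaxdeg : ∀ a, (innerNbrs G c a).card ≤ (crossNbrs G c a).card := by
    intro a
    rw [← Set.ncard_coe_finset, ← Set.ncard_coe_finset]
    by_cases ha : a ∈ V₀
    · convert ncard_inner_le_cross hV hd hmax ha using 2
      · ext z; simp [mem_innerNbrs, c, ha]
      · ext z; simp [mem_crossNbrs, c, ha, hV₁]
    · have ha' := (hV₁ a).1 ha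
      have hcomm : ∀ S T : Set (Fin n), edgesBetween G S T = edgesBetween G T S := fun S T => by
        rw [edgesBetween, crossEdges_comm, edgesBetween]
      convert ncard_inner_le_cross (G := G) ((Set.union_comm _ _).trans hV) hd.symm
        (fun S T h1 h2 => by
          rw [hcomm S T, hcomm V₁ V₀]
          exact hmax T S ((Set.union_comm _ _).trans h1) h2.symm) ha' using 2
      · ext z; simp [mem_innerNbrs, c, ha, hV₁]
      · ext z; simp [mem_crossNbrs, c, ha]
  have hquarter : ∀ a, n ≤ 4 * (crossNbrs G c a).card + 1 := by
    intro a
    have h1 := crossNbrs_add_innerNbrs (G := G) (c := c) a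
    have h2 := hmaxdeg a
    have h3 := hdeg a
    omega
  -- Sets of at least `n / 40` vertices on both sides span more pairs than there are missing ones.
  have hdense : ∀ A B : Finset (Fin n), (∀ a ∈ A, a ∈ V₀) → (∀ b ∈ B, b ∈ V₁) →
      n ≤ 40 * A.card → n ≤ 40 * B.card → ∃ a ∈ A, ∃ b ∈ B, G.Adj a b := by
    intro A B hA hB hAn hBn
    by_contra! hAB
    have h1 := card_mul_card_le_edgesIn hV hd (by simpa using (Nat.le_add_right _ _).trans hE)
      A B hA hB hAB
    have h2 := Nat.mul_le_mul hAn hBn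
    nlinarith
  have hodd : Conn G c (q - 2) (k * (q - 1) + 2 * k + 1) := by
    have h3 : Conn G c 3 (k * (q - 1) + 2 * k + 1 + (q - 5)) := by
      refine conn_three fun a b hab F hF => ?_
      have hbig : ∀ z, n ≤ 40 * (crossNbrs G c z \ F).card := by
        intro z
        have h1 := hquarter z
        have h2 := Finset.le_card_sdiff F (crossNbrs G c z)
        omega
      have hmem : ∀ z, ∀ t ∈ crossNbrs G c z \ F, c t ≠ c z := fun z t ht =>
        (mem_crossNbrs.1 (Finset.mem_sdiff.1 ht).1).2
      by_cases ha : a ∈ V₀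
      · have hb : b ∉ V₀ := fun hb => hab (by simp [c, ha, hb])
        obtain ⟨y, hy, x, hx, hyx⟩ := hdense _ _
          (fun t ht => by simpa [c, hb] using hmem b t ht)
          (fun t ht => by simpa [c, ha, hV₁] using hmem a t ht) (hbig b) (hbig a)
        rw [Finset.mem_sdiff] at hx hy
        exact ⟨x, y, hx.1, hx.2, hy.1, hy.2, hyx.symm⟩
      · have hb : b ∈ V₀ := by
          by_contra hb
          exact hab (by simp [c, ha, hb])
        obtain ⟨x, hx, y, hy, hxy⟩ := hdense _ _
          (fun t ht => by simpa [c, ha] using hmem a t ht)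
          (fun t ht => by simpa [c, hb, hV₁] using hmem b t ht) (hbig a) (hbig b)
        rw [Finset.mem_sdiff] at hx hy
        exact ⟨x, y, hx.1, hx.2, hy.1, hy.2, hxy⟩
    have := h3.iterate (q - 5) (fun a => by have := hquarter a; omega)
    rwa [show 3 + (q - 5) = q - 2 by omega] at this
  -- Hence every vertex is adjacent to all but boundedly many vertices of the opposite class.
  have hinner : ∀ a, (innerNbrs G c a).card < k :=
    card_innerNbrs_lt hq hqodd hG hodd (fun a => by have := hquarter a; omega)
  by_contra hnu
  obtain ⟨x, y, hxy, hside, hdisj⟩ := exists_matching_seq (G := G) hd (k := k) (by omega)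
    (⟨0, by omega⟩ : Fin n)
  refine hG (containsCopy_of_nearly_complete (c := c) hq hqodd (by simpa using hn) ?_ hodd x y hxy ?_
    (fun i hi j hj hij => by convert hdisj i hi j hj hij))
  · intro a
    have h1 := crossNbrs_add_innerNbrs (G := G) (c := c) a
    have h2 := hinner a
    have h3 := hdeg a
    rw [Fintype.card_fin]
    omega
  · intro i hi
    rcases hside i hi with h | h
    · simp [c, h.1, h.2]
    · simp [c, (hV₁ _).2 h.1, (hV₁ _).2 h.2]
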